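/- In the network inspection game with mutually disjoint monitoring sets, the value of the game (expected number of undetected attacks at any Nash equilibrium) equals b2 - Σ_{i=1}^{b1} λ_i · min( |E_{v_i}| , (1/k*)(b2 - Σ_{j=k*+1}^n |E_{v_j}|) ). -/

import Mathlib

open Finset

/-- A sensor positioning: each sensor is placed at a node or left unused (`none`). -/
abbrev Pos (n b1 : ℕ) := Fin b1 → Option (Fin n)

/-- A positioning is valid if no two sensors occupy the same node. -/
def ValidPos {n b1 : ℕ} (s : Pos n b1) : Prop :=
  ∀ j j' : Fin b1, s j = s j' → s j ≠ none → j = j'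

/-- The components of the network, grouped by the (mutually disjoint) monitoring
sets `E_{v_i}` of sizes `c i` (0-based indexing: node `i` is `v_{i+1}`). -/
abbrev Component (n : ℕ) (c : Fin n → ℕ) := (i : Fin n) × Fin (c i)

/-- A mixed inspection strategy: a probability distribution over valid positionings. -/
def MixedInsp (n b1 : ℕ) (σ : Pos n b1 → ℝ) : Prop :=
  (∀ s, 0 ≤ σ s) ∧ (∑ s, σ s = 1) ∧ (∀ s, σ s ≠ 0 → ValidPos s)

/-- A mixed attack strategy with budget `b2`: a distribution over attack plans. -/
def MixedAtk (n b2 : ℕ) (c : Fin n → ℕ) (τ : Finset (Component n c) → ℝ) : Prop :=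
  (∀ T, 0 ≤ τ T) ∧ (∑ T, τ T = 1) ∧ (∀ T, τ T ≠ 0 → T.card ≤ b2)

/-- Detection probability of node `i` under the mixed inspection strategy `σ`. -/
noncomputable def detProb {n b1 : ℕ} (lam : Fin b1 → ℝ) (σ : Pos n b1 → ℝ) (i : Fin n) : ℝ :=
  ∑ s, σ s * ∑ j, if s j = some i then lam j else 0

/-- Total attack probability mass placed on monitoring set `i` under `τ`,
i.e. `Σ_{e ∈ E_{v_i}} p_τ(e)`. -/
noncomputable def atkProb {n : ℕ} {c : Fin n → ℕ} (τ : Finset (Component n c) → ℝ) (i : Fin n) : ℝ :=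
  ∑ T, τ T * ((T.filter (fun e => e.1 = i)).card : ℝ)

/-- Expected number of undetected attacks; with mutually disjoint monitoring sets and
independent players' randomizations it equals `Σ_i q_i (1 - p_i)`. -/
noncomputable def U {n b1 : ℕ} (c : Fin n → ℕ) (lam : Fin b1 → ℝ)
    (σ : Pos n b1 → ℝ) (τ : Finset (Component n c) → ℝ) : ℝ :=
  ∑ i, atkProb τ i * (1 - detProb lam σ i)

/-- `Σ_{j=k+1}^n |E_{v_j}|` (1-based), i.e. sum of sizes with 0-based index `≥ k`. -/
def tailZ (n : ℕ) (c : Fin n → ℕ) (k : ℕ) : ℤ :=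
  ∑ j ∈ Finset.univ.filter (fun j : Fin n => k ≤ (j : ℕ)), (c j : ℤ)

/-- `|E_{v_{k+1}}|` (1-based), with the convention `|E_{v_{n+1}}| = 0`. -/
def cext (n : ℕ) (c : Fin n → ℕ) (k : ℕ) : ℤ :=
  if h : k < n then (c ⟨k, h⟩ : ℤ) else 0

/-- `k* = min { k ∈ [n] : b2 - Σ_{j=k+1}^n |E_{v_j}| ≥ k·|E_{v_{k+1}}| }`. -/
noncomputable def kstar (n b2 : ℕ) (c : Fin n → ℕ) : ℕ :=
  sInf {k | 1 ≤ k ∧ k ≤ n ∧ (k : ℤ) * cext n c k ≤ (b2 : ℤ) - tailZ n c k}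

/-- The value formula of Theorem 1:
`b2 - Σ_{i=1}^{b1} λ_i · min(|E_{v_i}|, (1/k*)(b2 - Σ_{j=k*+1}^n |E_{v_j}|))`. -/
noncomputable def valueFormula (n b1 b2 : ℕ) (c : Fin n → ℕ) (lam : Fin b1 → ℝ) : ℝ :=
  (b2 : ℝ) - ∑ j : Fin b1, lam j *
    min ((cext n c (j : ℕ) : ℝ))
      (((b2 : ℝ) - (tailZ n c (kstar n b2 c) : ℝ)) / (kstar n b2 c))

/-! Rotating the inspector's ranking of the first `k*` nodes uniformly at random detects each of
them with the average `P` of the corresponding accuracies, and no other node with higher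
probability; against this the attacker can do no better than to fill the nodes outside the rotation
and spread the rest of the budget over it. Conversely, by rotating a suitable plan the attacker hits
node `i` with mass `Q i = min |E_i| level`, where `level` is the common load of the first `k*`
nodes; this is antitone in `i`, so by the rearrangement inequality the inspector can do no better
than to match sensors and nodes in order. Both guarantees equal `b2 - ∑ λ_i Q_i`. -/

open scoped BigOperators

section Averaging

variable {α R : Type*}

lemma exists_sum_eq_of_le_sum (f : α → ℕ) (s : Finset α) {m : ℕ}
    (hm : m ≤ ∑ i ∈ s, f i) : ∃ a : α → ℕ, (∀ i, a i ≤ f i) ∧ ∑ i ∈ s, a i = m := by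
  classical
  induction s using Finset.induction_on generalizing m with
  | empty => exact ⟨0, by simp, by simp_all⟩
  | insert x s hx ih =>
    rw [sum_insert hx] at hm
    obtain ⟨a, ha, hsum⟩ := ih (m := m - min (f x) m) (by omega)
    refine ⟨Function.update a x (min (f x) m), fun i => ?_, ?_⟩
    · rcases eq_or_ne i x with rfl | hi
      · simp
      · simpa [hi] using ha i
    · rw [sum_insert hx, Function.update_self, sum_update_of_notMem hx, hsum]
      omega

lemma sum_mul_le_sum_mul_of_threshold [CommRing R] [LinearOrder R] [IsStrictOrderedRing R]
    {s : Finset α} {q Q w : α → R} {t : R} (ht : 0 ≤ t) (hw : ∀ i ∈ s, t ≤ w i)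
    (hqQ : ∀ i ∈ s, t < w i → q i ≤ Q i)
    (hsum : ∑ i ∈ s, q i ≤ ∑ i ∈ s, Q i) : ∑ i ∈ s, q i * w i ≤ ∑ i ∈ s, Q i * w i := by
  have hterm : ∀ i ∈ s, q i * (w i - t) ≤ Q i * (w i - t) := fun i hi => by
    rcases (hw i hi).eq_or_lt with h | h
    · simp [h]
    · exact mul_le_mul_of_nonneg_right (hqQ i hi h) (sub_nonneg.2 h.le)
  have hexcess := sum_le_sum hterm
  have hbase := mul_le_mul_of_nonneg_right hsum ht
  simp only [mul_sub, sum_sub_distrib, ← sum_mul] at hexcess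
  linarith

lemma sum_mul_le_of_forall_ne_zero [Semiring R] [PartialOrder R] [IsOrderedRing R] [Fintype α]
    {w F : α → R} {B : R} (hw : ∀ x, 0 ≤ w x) (hw1 : ∑ x, w x = 1) (hF : ∀ x, w x ≠ 0 → F x ≤ B) :
    ∑ x, w x * F x ≤ B :=
  calc ∑ x, w x * F x ≤ ∑ x, w x * B := sum_le_sum fun x _ => by
        by_cases hx : w x = 0
        · simp [hx]
        · exact mul_le_mul_of_nonneg_left (hF x hx) (hw x)
    _ = B := by rw [← sum_mul, hw1, one_mul]

/-- The function `f` with its values on `s` replaced by their average over `s`; this is the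
marginal profile obtained by rotating `s` uniformly at random. -/
noncomputable def averageOn [DecidableEq α] (s : Finset α) (f : α → ℝ) (i : α) : ℝ :=
  if i ∈ s then 𝔼 j ∈ s, f j else f i

lemma sum_averageOn_mul [Fintype α] [DecidableEq α] {s : Finset α} {Q : α → ℝ} {t : ℝ}
    (hQ : ∀ i ∈ s, Q i = t) (f : α → ℝ) : ∑ i, averageOn s f i * Q i = ∑ i, f i * Q i := by
  have hin : ∑ i ∈ s, averageOn s f i * Q i = ∑ i ∈ s, f i * Q i :=
    calc ∑ i ∈ s, averageOn s f i * Q i = ∑ _i ∈ s, (𝔼 j ∈ s, f j) * t :=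
          sum_congr rfl fun i hi => by rw [averageOn, if_pos hi, hQ i hi]
      _ = (∑ i ∈ s, f i) * t := by rw [sum_const, ← smul_mul_assoc, card_smul_expect]
      _ = ∑ i ∈ s, f i * Q i := by
          rw [sum_mul]
          exact sum_congr rfl fun i hi => by rw [hQ i hi]
  have hout : ∑ i ∈ sᶜ, averageOn s f i * Q i = ∑ i ∈ sᶜ, f i * Q i :=
    sum_congr rfl fun i hi => by rw [averageOn, if_neg (mem_compl.1 hi)]
  rw [← sum_add_sum_compl s, hin, hout, sum_add_sum_compl]

lemma expect_perm_pow_apply [DecidableEq α] {s : Finset α} {π : Equiv.Perm α}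
    (hs : s.Nonempty) (hπ : π.IsCycleOn s) (hfix : ∀ i ∉ s, π i = i) (f : α → ℝ) (i : α) :
    𝔼 r ∈ range #s, f ((π ^ r) i) = averageOn s f i := by
  unfold averageOn
  split_ifs with hi
  · have horbit : ∑ r ∈ range #s, f ((π ^ r) i) = ∑ j ∈ s, f j := by
      simpa [hi, Pi.single_apply] using (sum_smul_sum_eq_sum_perm hπ (Pi.single i (1 : ℝ)) f).symm
    rw [expect_eq_sum_div_card, horbit, card_range, ← expect_eq_sum_div_card]
  · have hpow : ∀ r, (π ^ r) i = i := fun r =>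
      Equiv.Perm.pow_apply_eq_self_of_apply_eq_self (hfix i hi) r
    simp only [hpow]
    exact expect_const (by simpa using hs.ne_empty) _

end Averaging

section UniformMixture

variable {ι α : Type*} [DecidableEq α]

/-- The distribution of `x r` for `r` drawn uniformly from `t`. -/
noncomputable def uniformMixture (t : Finset ι) (x : ι → α) (a : α) : ℝ :=
  𝔼 r ∈ t, if a = x r then 1 else 0

lemma uniformMixture_nonneg (t : Finset ι) (x : ι → α) (a : α) : 0 ≤ uniformMixture t x a :=
  expect_nonneg fun r _ => by split_ifs <;> norm_num

lemma exists_eq_of_uniformMixture_ne_zero {t : Finset ι} {x : ι → α} {a : α}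
    (h : uniformMixture t x a ≠ 0) : ∃ r ∈ t, x r = a := by
  obtain ⟨r, hr, hne⟩ := exists_ne_zero_of_expect_ne_zero h
  exact ⟨r, hr, by simpa [eq_comm] using hne⟩

lemma sum_uniformMixture_mul [Fintype α] (t : Finset ι) (x : ι → α) (F : α → ℝ) :
    ∑ a, uniformMixture t x a * F a = 𝔼 r ∈ t, F (x r) := by
  simp only [uniformMixture, expect_mul]
  rw [← expect_sum_comm]
  simp

lemma sum_uniformMixture [Fintype α] {t : Finset ι} (ht : t.Nonempty) (x : ι → α) :
    ∑ a, uniformMixture t x a = 1 := by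
  simpa [expect_const ht] using sum_uniformMixture_mul t x fun _ => 1

end UniformMixture

section ZeroExtend

variable {b : ℕ} {M : Type*}

/-- Extension by zero to `ℕ`, so that the accuracy of the sensor matched with a node makes sense
for nodes beyond the last sensor. -/
def zeroExtend [Zero M] (f : Fin b → M) (k : ℕ) : M :=
  if h : k < b then f ⟨k, h⟩ else 0

@[simp]
lemma zeroExtend_val [Zero M] (f : Fin b → M) (j : Fin b) : zeroExtend f j = f j := by
  simp [zeroExtend]

lemma zeroExtend_of_le [Zero M] (f : Fin b → M) {k : ℕ} (hk : b ≤ k) : zeroExtend f k = 0 := by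
  simp [zeroExtend, hk]

lemma zeroExtend_le [Zero M] [Preorder M] {f : Fin b → M} {B : M} (hB : 0 ≤ B)
    (hf : ∀ j, f j ≤ B) (k : ℕ) : zeroExtend f k ≤ B := by
  unfold zeroExtend
  split_ifs
  exacts [hf _, hB]

lemma antitone_zeroExtend [Zero M] [Preorder M] {f : Fin b → M} (hf : Antitone f)
    (hf0 : ∀ j, 0 ≤ f j) : Antitone (zeroExtend f) := by
  intro i j hij
  unfold zeroExtend
  split_ifs with hj hi hi
  · exact hf hij
  · exact absurd (hij.trans_lt hj) hi
  · exact hf0 _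
  · exact le_rfl

lemma sum_zeroExtend_mul [NonUnitalNonAssocSemiring M] (f : Fin b → M) (F : ℕ → M) {N : ℕ}
    (hF : ∀ j : Fin b, N ≤ (j : ℕ) → F j = 0) :
    ∑ i : Fin N, zeroExtend f i * F i = ∑ j, f j * F j := by
  have hb : ∑ j, f j * F j = ∑ i ∈ range b, zeroExtend f i * F i := by
    simp [sum_range]
  rw [hb, ← sum_range fun i => zeroExtend f i * F i]
  refine sum_congr_of_eq_on_inter (fun i _ hi => ?_) (fun i hi hiN => ?_) fun _ _ _ => rfl
  · rw [zeroExtend_of_le f (by simpa using hi), zero_mul]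
  · rw [hF ⟨i, mem_range.1 hi⟩ (by simpa using hiN), mul_zero]

lemma sum_mul_comp_le_sum_mul_of_injective [CommRing M] [LinearOrder M] [IsStrictOrderedRing M]
    {L : Fin b → M} {Q : ℕ → M} (hL : Antitone L) (hL0 : ∀ j, 0 ≤ L j)
    (hQ : Antitone Q) {g : Fin b → ℕ} (hg : Function.Injective g) :
    ∑ j, L j * Q (g j) ≤ ∑ j, L j * Q j := by
  obtain ⟨N, hbN, hgN⟩ : ∃ N, b ≤ N ∧ ∀ j, g j < N :=
    ⟨max b (univ.sup g + 1), le_max_left .., fun j =>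
      lt_max_of_lt_right (Nat.lt_succ_of_le (le_sup (mem_univ j)))⟩
  obtain ⟨π, hπ⟩ := Equiv.Perm.exists_extending_pair (Fin.castLE hbN)
    (fun j => (⟨g j, hgN j⟩ : Fin N)) (Fin.castLE_injective hbN)
    (fun j j' h => hg (Fin.mk.inj h))
  have hmono : Monovary (fun i : Fin N => zeroExtend L i) (fun i : Fin N => Q i) :=
    ((antitone_zeroExtend hL hL0).comp_monotone Fin.val_strictMono.monotone).monovary
      (hQ.comp_monotone Fin.val_strictMono.monotone)
  let F : ℕ → M := zeroExtend fun i : Fin N => Q (π i)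
  have hF : ∀ j : Fin b, F j = Q (g j) := fun j => by
    have hval : F (Fin.castLE hbN j) = Q (π (Fin.castLE hbN j)) := zeroExtend_val _ _
    simpa [hπ] using hval
  have hN : ∀ G : ℕ → M, ∑ i : Fin N, zeroExtend L i * G i = ∑ j, L j * G j := fun G =>
    sum_zeroExtend_mul L G fun j hj => absurd (j.2.trans_le hbN) hj.not_gt
  calc ∑ j, L j * Q (g j) = ∑ i : Fin N, zeroExtend L i * F i := by simp only [hN, hF]
    _ = ∑ i : Fin N, zeroExtend L i * Q (π i) := by simp only [F, zeroExtend_val]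
    _ ≤ ∑ i : Fin N, zeroExtend L i * Q i := hmono.sum_mul_comp_perm_le_sum_mul
    _ = ∑ j, L j * Q j := hN Q

end ZeroExtend

section Inspection

variable {n b1 : ℕ}

/-- The positioning that puts sensor `j` on node `π⁻¹ j`, and leaves it unused if `n ≤ j`. -/
def placement (b1 : ℕ) (π : Equiv.Perm (Fin n)) : Pos n b1 :=
  fun j => if h : (j : ℕ) < n then some (π.symm ⟨j, h⟩) else none

lemma placement_eq_some_iff {π : Equiv.Perm (Fin n)} {j : Fin b1} {i : Fin n} :
    placement b1 π j = some i ↔ (j : ℕ) = π i := by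
  unfold placement
  split_ifs with h
  · rw [Option.some_inj, Equiv.symm_apply_eq, Fin.ext_iff]
  · exact iff_of_false (by simp) fun hj : (j : ℕ) = π i => h (hj.trans_lt (π i).2)

lemma validPos_placement (π : Equiv.Perm (Fin n)) : ValidPos (placement b1 π) := by
  intro j j' hjj' hj
  obtain ⟨i, hi⟩ := Option.ne_none_iff_exists'.1 hj
  exact Fin.ext ((placement_eq_some_iff.1 hi).trans
    (placement_eq_some_iff.1 (hjj' ▸ hi)).symm)

lemma sum_ite_placement (lam : Fin b1 → ℝ) (π : Equiv.Perm (Fin n)) (i : Fin n) :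
    ∑ j, (if placement b1 π j = some i then lam j else 0) = zeroExtend lam (π i) := by
  simp only [placement_eq_some_iff]
  by_cases h : (π i : ℕ) < b1
  · have hj : ∀ j : Fin b1, (j : ℕ) = π i ↔ j = ⟨π i, h⟩ := fun j => by rw [Fin.ext_iff]
    simp [hj, zeroExtend, h]
  · rw [zeroExtend_of_le lam (not_lt.1 h)]
    exact sum_eq_zero fun j _ => if_neg fun hj => h (hj.symm.trans_lt j.2)

lemma exists_mixedInsp_detProb_eq_averageOn (lam : Fin b1 → ℝ) {s : Finset (Fin n)}
    (hs : s.Nonempty) : ∃ σ : Pos n b1 → ℝ, MixedInsp n b1 σ ∧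
      ∀ i, detProb lam σ i = averageOn s (fun i => zeroExtend lam i) i := by
  obtain ⟨π, hπ, hsupp⟩ := s.exists_cycleOn
  have hrange : (range #s).Nonempty := by simpa using hs.ne_empty
  refine ⟨uniformMixture (range #s) fun r => placement b1 (π ^ r),
    ⟨uniformMixture_nonneg _ _, sum_uniformMixture hrange _, fun p hp => ?_⟩, fun i => ?_⟩
  · obtain ⟨r, -, rfl⟩ := exists_eq_of_uniformMixture_ne_zero hp
    exact validPos_placement _
  · rw [detProb, sum_uniformMixture_mul _ _ fun p : Pos n b1 =>
      ∑ j, if p j = some i then lam j else 0]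
    simp only [sum_ite_placement]
    exact expect_perm_pow_apply hs hπ
      (fun j hj => Equiv.Perm.notMem_support.1 fun h => hj (hsupp h))
      (fun i => zeroExtend lam i) i

lemma sum_mul_elim_le_of_validPos {lam : Fin b1 → ℝ} (hlam : Antitone lam)
    (hlam0 : ∀ j, 0 ≤ lam j) {Q : ℕ → ℝ} (hQ : Antitone Q) (hQ0 : ∀ i, 0 ≤ Q i) {p : Pos n b1}
    (hp : ValidPos p) :
    ∑ j, lam j * (p j).elim 0 (fun i => Q i) ≤ ∑ j, lam j * Q j := by
  -- Unused sensors are sent to pairwise distinct fictitious nodes beyond `n`.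
  let g : Fin b1 → ℕ := fun j => (p j).elim (n + j) Fin.val
  have hg : Function.Injective g := by
    intro j j' h
    rcases hj : p j with _ | i <;> rcases hj' : p j' with _ | i' <;>
      simp only [g, hj, hj', Option.elim_none, Option.elim_some] at h
    · exact Fin.ext (by omega)
    · omega
    · omega
    · exact hp j j' (by rw [hj, hj', Fin.ext h]) (by simp [hj])
  have helim : ∀ j, (p j).elim 0 (fun i => Q i) ≤ Q (g j) := fun j => by
    rcases hj : p j with _ | i <;> simp [g, hj, hQ0]
  exact (sum_le_sum fun j _ => mul_le_mul_of_nonneg_left (helim j) (hlam0 j)).trans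
    (sum_mul_comp_le_sum_mul_of_injective hlam hlam0 hQ hg)

lemma sum_detProb_mul (lam : Fin b1 → ℝ) (σ : Pos n b1 → ℝ) (Q : Fin n → ℝ) :
    ∑ i, detProb lam σ i * Q i = ∑ p, σ p * ∑ j, lam j * (p j).elim 0 Q := by
  have hnode : ∀ (p : Pos n b1) (j : Fin b1),
      ∑ i, (if p j = some i then lam j else 0) * Q i = lam j * (p j).elim 0 Q := fun p j => by
    rcases p j with _ | i <;> simp
  simp only [detProb, sum_mul, mul_assoc]
  rw [sum_comm]
  refine sum_congr rfl fun p _ => ?_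
  rw [← mul_sum, sum_comm]
  simp only [hnode]

lemma sum_detProb_mul_le {lam : Fin b1 → ℝ} (hlam : Antitone lam) (hlam0 : ∀ j, 0 ≤ lam j)
    {Q : ℕ → ℝ} (hQ : Antitone Q) (hQ0 : ∀ i, 0 ≤ Q i) {σ : Pos n b1 → ℝ}
    (hσ : MixedInsp n b1 σ) :
    ∑ i : Fin n, detProb lam σ i * Q i ≤ ∑ j, lam j * Q j := by
  rw [sum_detProb_mul lam σ fun i => Q i]
  exact sum_mul_le_of_forall_ne_zero hσ.1 hσ.2.1 fun p hp =>
    sum_mul_elim_le_of_validPos hlam hlam0 hQ hQ0 (hσ.2.2 p hp)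

end Inspection

section Attack

variable {n b2 : ℕ} {c : Fin n → ℕ}

lemma card_eq_sum_card_filter_fst (T : Finset (Component n c)) :
    #T = ∑ i, #{e ∈ T | e.1 = i} :=
  card_eq_sum_card_fiberwise fun _ _ => mem_univ _

/-- The attack plan hitting `a i` components of each monitoring set `i`, provided that
`a i ≤ c i`. -/
def attackPlan (c a : Fin n → ℕ) : Finset (Component n c) :=
  {e | (e.2 : ℕ) < a e.1}

lemma card_filter_attackPlan (a : Fin n → ℕ) (i : Fin n) :
    #{e ∈ attackPlan c a | e.1 = i} = min (c i) (a i) := by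
  rw [attackPlan, filter_filter, card_filter, Fintype.sum_sigma,
    sum_eq_single i (fun j _ hj => by simp [hj]) (by simp)]
  simp only [and_true, ← card_filter]
  exact Fin.card_filter_val_lt

lemma card_filter_fst_le (T : Finset (Component n c)) (i : Fin n) :
    #{e ∈ T | e.1 = i} ≤ c i := by
  have hsub : T ⊆ attackPlan c c := fun e _ => by simp [attackPlan]
  simpa [card_filter_attackPlan] using card_le_card (filter_subset_filter (·.1 = i) hsub)

lemma atkProb_le {τ : Finset (Component n c) → ℝ} (hτ : MixedAtk n b2 c τ) (i : Fin n) :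
    atkProb τ i ≤ c i :=
  sum_mul_le_of_forall_ne_zero hτ.1 hτ.2.1 fun T _ => by exact_mod_cast card_filter_fst_le T i

lemma sum_atkProb_le {τ : Finset (Component n c) → ℝ} (hτ : MixedAtk n b2 c τ) :
    ∑ i, atkProb τ i ≤ b2 := by
  have hcard : ∑ i, atkProb τ i = ∑ T, τ T * (#T : ℝ) := by
    simp only [atkProb]
    rw [sum_comm]
    refine sum_congr rfl fun T _ => ?_
    rw [← mul_sum, ← Nat.cast_sum, ← card_eq_sum_card_filter_fst]
  rw [hcard]
  exact sum_mul_le_of_forall_ne_zero hτ.1 hτ.2.1 fun T hT => by exact_mod_cast hτ.2.2 T hT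

lemma exists_mixedAtk_atkProb_eq_averageOn {s : Finset (Fin n)} (hs : s.Nonempty)
    {a : Fin n → ℕ} (hin : ∀ i ∈ s, ∀ j ∈ s, a j ≤ c i) (hout : ∀ i ∉ s, a i ≤ c i)
    (hsum : ∑ i, a i ≤ b2) : ∃ τ : Finset (Component n c) → ℝ, MixedAtk n b2 c τ ∧
      ∀ i, atkProb τ i = averageOn s (fun i => (a i : ℝ)) i := by
  obtain ⟨π, hπ, hsupp⟩ := s.exists_cycleOn
  have hrange : (range #s).Nonempty := by simpa using hs.ne_empty
  have hfix : ∀ i ∉ s, π i = i := fun i hi => Equiv.Perm.notMem_support.1 fun h => hi (hsupp h)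
  have hfits : ∀ (r : ℕ) (i : Fin n), a ((π ^ r) i) ≤ c i := fun r i => by
    by_cases hi : i ∈ s
    · exact hin i hi _ (((hπ.1.perm_pow r).mapsTo) hi)
    · rw [Equiv.Perm.pow_apply_eq_self_of_apply_eq_self (hfix i hi)]
      exact hout i hi
  have hcount : ∀ (r : ℕ) (i : Fin n),
      #{e ∈ attackPlan c (a ∘ ⇑(π ^ r)) | e.1 = i} = a ((π ^ r) i) := fun r i => by
    rw [card_filter_attackPlan]
    exact min_eq_right (hfits r i)
  refine ⟨uniformMixture (range #s) fun r => attackPlan c (a ∘ ⇑(π ^ r)),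
    ⟨uniformMixture_nonneg _ _, sum_uniformMixture hrange _, fun T hT => ?_⟩, fun i => ?_⟩
  · obtain ⟨r, -, rfl⟩ := exists_eq_of_uniformMixture_ne_zero hT
    rw [card_eq_sum_card_filter_fst]
    simp only [hcount]
    exact (Equiv.sum_comp (π ^ r) a).trans_le hsum
  · rw [atkProb, sum_uniformMixture_mul _ _ fun T : Finset (Component n c) =>
      (#{e ∈ T | e.1 = i} : ℝ)]
    simp only [hcount]
    exact expect_perm_pow_apply hs hπ hfix (fun i => (a i : ℝ)) i

end Attack

section Kstar

variable {n : ℕ} (b2 : ℕ) {c : Fin n → ℕ}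

lemma cext_val (c : Fin n → ℕ) (i : Fin n) : cext n c i = c i := by
  simp [cext]

lemma cext_of_le (c : Fin n → ℕ) {k : ℕ} (hk : n ≤ k) : cext n c k = 0 := by
  simp [cext, hk]

lemma antitone_cext (hc : Antitone c) : Antitone (cext n c) :=
  antitone_zeroExtend (f := fun i => (c i : ℤ)) (fun _ _ h => Int.ofNat_le.2 (hc h))
    fun _ => by positivity

lemma cext_nonneg (c : Fin n → ℕ) (k : ℕ) : 0 ≤ cext n c k := by
  unfold cext
  split_ifs <;> positivity

lemma tailZ_eq_cext_add (c : Fin n → ℕ) {k : ℕ} (hk : k < n) :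
    tailZ n c k = cext n c k + tailZ n c (k + 1) := by
  have hinsert : ({j | k ≤ (j : ℕ)} : Finset (Fin n))
      = insert ⟨k, hk⟩ ({j | k + 1 ≤ (j : ℕ)} : Finset (Fin n)) := by
    ext j
    simp only [mem_filter, mem_univ, true_and, mem_insert, Fin.ext_iff]
    omega
  rw [tailZ, tailZ, hinsert, sum_insert (by simp), cext, dif_pos hk]

lemma kstar_mem (c : Fin n → ℕ) (hn : 1 ≤ n) : 1 ≤ kstar n b2 c ∧ kstar n b2 c ≤ n ∧
    (kstar n b2 c : ℤ) * cext n c (kstar n b2 c) ≤ b2 - tailZ n c (kstar n b2 c) := by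
  refine Nat.sInf_mem (s := {k | 1 ≤ k ∧ k ≤ n ∧ (k : ℤ) * cext n c k ≤ b2 - tailZ n c k})
    ⟨n, hn, le_rfl, ?_⟩
  simp [cext_of_le, tailZ, filter_false_of_mem]

variable {b2}

lemma sub_tailZ_le_mul_cext_of_lt_kstar (hb2E : b2 ≤ ∑ i, c i) {k : ℕ} (hkn : k < n)
    (hk : k < kstar n b2 c) : (b2 : ℤ) - tailZ n c k ≤ k * cext n c k := by
  rcases Nat.eq_zero_or_pos k with rfl | hpos
  · have htotal : tailZ n c 0 = ((∑ i, c i : ℕ) : ℤ) := by simp [tailZ]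
    rw [htotal]
    push_cast
    have hbudget : (b2 : ℤ) ≤ ∑ i, (c i : ℤ) := by exact_mod_cast hb2E
    linarith
  · by_contra! hlt
    exact Nat.notMem_of_lt_sInf hk ⟨hpos, hkn.le, hlt.le⟩

lemma sub_tailZ_kstar_le_mul_cext (hn : 1 ≤ n) (hc : Antitone c) (hb2E : b2 ≤ ∑ i, c i) {i : ℕ}
    (hi : i < kstar n b2 c) :
    (b2 : ℤ) - tailZ n c (kstar n b2 c) ≤ kstar n b2 c * cext n c i := by
  obtain ⟨-, hkn, -⟩ := kstar_mem b2 c hn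
  obtain ⟨l, hl⟩ : ∃ l, kstar n b2 c = l + 1 := ⟨kstar n b2 c - 1, by omega⟩
  have hmin := sub_tailZ_le_mul_cext_of_lt_kstar hb2E (k := l) (by omega) (by omega)
  rw [tailZ_eq_cext_add c (by omega : l < n)] at hmin
  calc (b2 : ℤ) - tailZ n c (kstar n b2 c) ≤ (l + 1) * cext n c l := by rw [hl]; linarith
    _ ≤ (l + 1) * cext n c i :=
        mul_le_mul_of_nonneg_left (antitone_cext hc (by omega)) (by positivity)
    _ = kstar n b2 c * cext n c i := by rw [hl]; push_cast; rfl

end Kstar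

section Equilibrium

variable {n b1 b2 : ℕ} {c : Fin n → ℕ} {lam : Fin b1 → ℝ}

/-- The nodes `v_1, …, v_{k*}`. -/
noncomputable def topNodes (b2 : ℕ) (c : Fin n → ℕ) : Finset (Fin n) :=
  {i | (i : ℕ) < kstar n b2 c}

/-- The common expected number of attacks on each of the nodes `v_1, …, v_{k*}` in equilibrium. -/
noncomputable def attackLevel (b2 : ℕ) (c : Fin n → ℕ) : ℝ :=
  ((b2 : ℝ) - (tailZ n c (kstar n b2 c) : ℝ)) / kstar n b2 c

/-- The expected number of attacks on node `i` in equilibrium (zero for `n ≤ i`). -/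
noncomputable def attackTarget (b2 : ℕ) (c : Fin n → ℕ) (i : ℕ) : ℝ :=
  min (cext n c i : ℝ) (attackLevel b2 c)

lemma mem_topNodes {i : Fin n} : i ∈ topNodes b2 c ↔ (i : ℕ) < kstar n b2 c := by
  simp [topNodes]

lemma card_topNodes (hn : 1 ≤ n) : #(topNodes b2 c) = kstar n b2 c := by
  rw [topNodes, Fin.card_filter_val_lt, min_eq_right (kstar_mem b2 c hn).2.1]

lemma topNodes_nonempty (hn : 1 ≤ n) : (topNodes b2 c).Nonempty := by
  rw [← card_pos, card_topNodes hn]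
  exact (kstar_mem b2 c hn).1

lemma sum_compl_topNodes : ∑ i ∈ (topNodes b2 c)ᶜ, (c i : ℝ) = tailZ n c (kstar n b2 c) := by
  simp [tailZ, topNodes, compl_filter]

lemma cext_kstar_le_attackLevel (hn : 1 ≤ n) :
    (cext n c (kstar n b2 c) : ℝ) ≤ attackLevel b2 c := by
  obtain ⟨hk, -, hle⟩ := kstar_mem b2 c hn
  rw [attackLevel, le_div_iff₀' (by exact_mod_cast hk)]
  exact_mod_cast hle

lemma attackTarget_of_lt (hn : 1 ≤ n) (hc : Antitone c) (hb2E : b2 ≤ ∑ i, c i) {i : ℕ}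
    (hi : i < kstar n b2 c) : attackTarget b2 c i = attackLevel b2 c := by
  refine min_eq_right ?_
  rw [attackLevel, div_le_iff₀' (by exact_mod_cast (kstar_mem b2 c hn).1)]
  exact_mod_cast sub_tailZ_kstar_le_mul_cext hn hc hb2E hi

lemma attackTarget_of_le (hn : 1 ≤ n) (hc : Antitone c) {i : ℕ} (hi : kstar n b2 c ≤ i) :
    attackTarget b2 c i = cext n c i :=
  min_eq_left <| le_trans (by exact_mod_cast antitone_cext hc hi) (cext_kstar_le_attackLevel hn)

lemma antitone_attackTarget (hc : Antitone c) : Antitone (attackTarget b2 c) := fun _ _ h =>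
  min_le_min_right _ (by exact_mod_cast antitone_cext hc h)

lemma attackTarget_nonneg (hn : 1 ≤ n) (i : ℕ) : 0 ≤ attackTarget b2 c i :=
  le_min (by exact_mod_cast cext_nonneg c i)
    (le_trans (by exact_mod_cast cext_nonneg c _) (cext_kstar_le_attackLevel hn))

lemma attackTarget_eq_averageOn (hn : 1 ≤ n) (hc : Antitone c) (hb2E : b2 ≤ ∑ i, c i)
    {a : Fin n → ℕ} (hin : ∑ i ∈ topNodes b2 c, (a i : ℤ) = b2 - tailZ n c (kstar n b2 c))
    (hout : ∀ i ∉ topNodes b2 c, a i = c i) (i : Fin n) :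
    attackTarget b2 c i = averageOn (topNodes b2 c) (fun i => (a i : ℝ)) i := by
  unfold averageOn
  split_ifs with hi
  · have hinR : ∑ i ∈ topNodes b2 c, (a i : ℝ) = b2 - tailZ n c (kstar n b2 c) := by
      exact_mod_cast hin
    rw [attackTarget_of_lt hn hc hb2E (mem_topNodes.1 hi), expect_eq_sum_div_card,
      card_topNodes hn, hinR, attackLevel]
  · rw [attackTarget_of_le hn hc (not_lt.1 (mem_topNodes.not.1 hi)), cext_val]
    simp only [hout i hi, Int.cast_natCast]

lemma sum_attackTarget (hn : 1 ≤ n) (hc : Antitone c) (hb2E : b2 ≤ ∑ i, c i) :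
    ∑ i : Fin n, attackTarget b2 c i = b2 := by
  have hk : (kstar n b2 c : ℝ) ≠ 0 :=
    Nat.cast_ne_zero.2 (Nat.ne_of_gt (kstar_mem b2 c hn).1)
  have hin : ∑ i ∈ topNodes b2 c, attackTarget b2 c i = b2 - tailZ n c (kstar n b2 c) := by
    rw [sum_congr rfl fun i hi => attackTarget_of_lt hn hc hb2E (mem_topNodes.1 hi), sum_const,
      card_topNodes hn, nsmul_eq_mul, attackLevel, mul_div_cancel₀ _ hk]
  have hout : ∑ i ∈ (topNodes b2 c)ᶜ, attackTarget b2 c i = tailZ n c (kstar n b2 c) := by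
    rw [← sum_compl_topNodes]
    refine sum_congr rfl fun i hi => ?_
    rw [attackTarget_of_le hn hc (by simpa [mem_topNodes] using hi), cext_val, Int.cast_natCast]
  rw [← sum_add_sum_compl (topNodes b2 c), hin, hout, sub_add_cancel]

lemma exists_attackCounts (hn : 1 ≤ n) (hc : Antitone c) (hb2E : b2 ≤ ∑ i, c i) :
    ∃ a : Fin n → ℕ, (∀ i ∈ topNodes b2 c, ∀ j ∈ topNodes b2 c, a j ≤ c i) ∧
      (∀ i ∉ topNodes b2 c, a i = c i) ∧
      ∑ i ∈ topNodes b2 c, (a i : ℤ) = b2 - tailZ n c (kstar n b2 c) := by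
  obtain ⟨hk, hkn, hle⟩ := kstar_mem b2 c hn
  obtain ⟨m, hm⟩ := Int.eq_ofNat_of_zero_le
    ((mul_nonneg (by positivity) (cext_nonneg c _)).trans hle)
  let last : Fin n := ⟨kstar n b2 c - 1, by omega⟩
  have hcap : m ≤ ∑ _i ∈ topNodes b2 c, c last := by
    have hlast := sub_tailZ_kstar_le_mul_cext hn hc hb2E (i := last) (by simp [last]; omega)
    rw [hm, cext_val] at hlast
    rw [sum_const, card_topNodes hn, smul_eq_mul]
    exact_mod_cast hlast
  obtain ⟨a, ha, hsum⟩ := exists_sum_eq_of_le_sum (fun _ => c last) (topNodes b2 c) hcap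
  refine ⟨fun i => if i ∈ topNodes b2 c then a i else c i, fun i hi j hj => ?_,
    fun i hi => if_neg hi, ?_⟩
  · have hile : i ≤ last := Nat.le_sub_one_of_lt (mem_topNodes.1 hi)
    simp only [if_pos hj]
    exact (ha j).trans (hc hile)
  · rw [hm, ← hsum, Nat.cast_sum]
    exact sum_congr rfl fun i hi => by simp only [if_pos hi]

lemma exists_mixedAtk_atkProb_eq_attackTarget (hn : 1 ≤ n) (hc : Antitone c)
    (hb2E : b2 ≤ ∑ i, c i) : ∃ τ : Finset (Component n c) → ℝ, MixedAtk n b2 c τ ∧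
      ∀ i : Fin n, atkProb τ i = attackTarget b2 c i := by
  obtain ⟨a, hin, hout, hsum⟩ := exists_attackCounts hn hc hb2E
  have htarget := attackTarget_eq_averageOn hn hc hb2E hsum hout
  have htotal : ∑ i, (a i : ℤ) = b2 := by
    have htail : ∑ i ∈ (topNodes b2 c)ᶜ, (a i : ℤ) = tailZ n c (kstar n b2 c) := by
      rw [sum_congr rfl fun i hi => by rw [hout i (mem_compl.1 hi)]]
      exact_mod_cast sum_compl_topNodes (b2 := b2) (c := c)
    rw [← sum_add_sum_compl (topNodes b2 c), hsum, htail, sub_add_cancel]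
  obtain ⟨τ, hτ, hprob⟩ := exists_mixedAtk_atkProb_eq_averageOn (topNodes_nonempty hn) hin
    (fun i hi => (hout i hi).le) (b2 := b2) (by exact_mod_cast htotal.le)
  exact ⟨τ, hτ, fun i => (hprob i).trans (htarget i).symm⟩

lemma valueFormula_eq_sub_sum_attackTarget (lam : Fin b1 → ℝ) :
    valueFormula n b1 b2 c lam = b2 - ∑ j, lam j * attackTarget b2 c j :=
  rfl

lemma sum_attackTarget_mul_one_sub (hn : 1 ≤ n) (hc : Antitone c) (hb2E : b2 ≤ ∑ i, c i)
    (p : Fin n → ℝ) : ∑ i : Fin n, attackTarget b2 c i * (1 - p i)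
      = b2 - ∑ i : Fin n, p i * attackTarget b2 c i := by
  simp only [mul_sub, mul_one, sum_sub_distrib, sum_attackTarget hn hc hb2E, mul_comm (p _)]

lemma exists_mixedAtk_forall_valueFormula_le_U (hn : 1 ≤ n) (hc : Antitone c)
    (hlam : Antitone lam) (hlam0 : ∀ j, 0 ≤ lam j) (hb2E : b2 ≤ ∑ i, c i) :
    ∃ τ, MixedAtk n b2 c τ ∧
      ∀ σ, MixedInsp n b1 σ → valueFormula n b1 b2 c lam ≤ U c lam σ τ := by
  obtain ⟨τ, hτ, hatk⟩ := exists_mixedAtk_atkProb_eq_attackTarget hn hc hb2E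
  refine ⟨τ, hτ, fun σ hσ => ?_⟩
  simp only [U, hatk]
  rw [sum_attackTarget_mul_one_sub hn hc hb2E, valueFormula_eq_sub_sum_attackTarget]
  exact sub_le_sub_left (sum_detProb_mul_le hlam hlam0 (antitone_attackTarget hc)
    (attackTarget_nonneg hn) hσ) _

lemma sum_averageOn_mul_attackTarget (hn : 1 ≤ n) (hc : Antitone c) (hb2E : b2 ≤ ∑ i, c i)
    (lam : Fin b1 → ℝ) :
    ∑ i : Fin n, averageOn (topNodes b2 c) (fun i => zeroExtend lam i) i * attackTarget b2 c i
      = ∑ j, lam j * attackTarget b2 c j := by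
  have hkn := (kstar_mem b2 c hn).2.1
  rw [sum_averageOn_mul fun i hi => attackTarget_of_lt hn hc hb2E (mem_topNodes.1 hi)]
  refine sum_zeroExtend_mul lam _ fun j hj => ?_
  rw [attackTarget_of_le hn hc (hkn.trans hj), cext_of_le c hj, Int.cast_zero]

lemma averageOn_topNodes_le_expect (hn : 1 ≤ n) (hlam : Antitone lam) (hlam0 : ∀ j, 0 ≤ lam j)
    (i : Fin n) : averageOn (topNodes b2 c) (fun i => zeroExtend lam i) i
      ≤ 𝔼 j ∈ topNodes b2 c, zeroExtend lam j := by
  unfold averageOn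
  split_ifs with hi
  · exact le_rfl
  · refine le_expect (topNodes_nonempty hn) fun j hj => antitone_zeroExtend hlam hlam0 ?_
    rw [mem_topNodes] at hi hj
    omega

lemma exists_mixedInsp_forall_U_le_valueFormula (hn : 1 ≤ n) (hc : Antitone c)
    (hlam : Antitone lam) (hlam01 : ∀ j, 0 ≤ lam j ∧ lam j ≤ 1) (hb2E : b2 ≤ ∑ i, c i) :
    ∃ σ, MixedInsp n b1 σ ∧
      ∀ τ, MixedAtk n b2 c τ → U c lam σ τ ≤ valueFormula n b1 b2 c lam := by
  have hS := topNodes_nonempty (b2 := b2) (c := c) hn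
  obtain ⟨σ, hσ, hdet⟩ := exists_mixedInsp_detProb_eq_averageOn lam hS
  refine ⟨σ, hσ, fun τ hτ => ?_⟩
  set P := 𝔼 j ∈ topNodes b2 c, zeroExtend lam j with hP
  have hP1 : P ≤ 1 := expect_le hS fun j _ => zeroExtend_le zero_le_one (fun j => (hlam01 j).2) j
  have hdetP : ∀ i, detProb lam σ i ≤ P := fun i =>
    (hdet i).trans_le (averageOn_topNodes_le_expect hn hlam (fun j => (hlam01 j).1) i)
  have hfull : ∀ i, 1 - P < 1 - detProb lam σ i → atkProb τ i ≤ attackTarget b2 c i := by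
    intro i hlt
    have hi : i ∉ topNodes b2 c := fun hi => by simp [hdet, averageOn, hi, hP] at hlt
    rw [attackTarget_of_le hn hc (not_lt.1 (mem_topNodes.not.1 hi)), cext_val]
    exact atkProb_le hτ i
  calc U c lam σ τ
      ≤ ∑ i : Fin n, attackTarget b2 c i * (1 - detProb lam σ i) :=
        sum_mul_le_sum_mul_of_threshold (sub_nonneg.2 hP1)
          (fun i _ => sub_le_sub_left (hdetP i) 1) (fun i _ => hfull i)
          ((sum_atkProb_le hτ).trans_eq (sum_attackTarget hn hc hb2E).symm)
    _ = valueFormula n b1 b2 c lam := by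
        rw [sum_attackTarget_mul_one_sub hn hc hb2E, valueFormula_eq_sub_sum_attackTarget]
        simp only [hdet, sum_averageOn_mul_attackTarget hn hc hb2E]

end Equilibrium

theorem disjoint_game_value_general {n b1 b2 : ℕ} (hn : 1 ≤ n) {c : Fin n → ℕ} (hc : Antitone c)
    {lam : Fin b1 → ℝ} (hlam : Antitone lam) (hlam01 : ∀ j, 0 ≤ lam j ∧ lam j ≤ 1)
    (hb2E : b2 ≤ ∑ i, c i) {σs : Pos n b1 → ℝ} {τs : Finset (Component n c) → ℝ}
    (hσs : MixedInsp n b1 σs) (hτs : MixedAtk n b2 c τs)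
    (hNE1 : ∀ τ, MixedAtk n b2 c τ → U c lam σs τ ≤ U c lam σs τs)
    (hNE2 : ∀ σ, MixedInsp n b1 σ → U c lam σs τs ≤ U c lam σ τs) :
    U c lam σs τs = valueFormula n b1 b2 c lam := by
  obtain ⟨σ, hσ, hupper⟩ := exists_mixedInsp_forall_U_le_valueFormula hn hc hlam hlam01 hb2E
  obtain ⟨τ, hτ, hlower⟩ :=
    exists_mixedAtk_forall_valueFormula_le_U hn hc hlam (fun j => (hlam01 j).1) hb2E
  exact le_antisymm ((hNE2 σ hσ).trans (hupper τs hτs)) ((hlower σs hσs).trans (hNE1 τ hτ))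

/-- **Theorem 1, value.** With mutually disjoint monitoring sets, the value
of the game — the expected number of undetected attacks at any Nash equilibrium — equals
`b2 - Σ_{i=1}^{b1} λ_i · min(|E_{v_i}|, (1/k*)(b2 - Σ_{j=k*+1}^n |E_{v_j}|))`. -/
theorem disjoint_game_value (n b1 b2 : ℕ) (hn : 1 ≤ n) (hb1n : b1 ≤ n)
    (c : Fin n → ℕ) (hc : Antitone c) (hcpos : ∀ i, 1 ≤ c i)
    (lam : Fin b1 → ℝ) (hlam : Antitone lam) (hlam01 : ∀ j, 0 < lam j ∧ lam j ≤ 1)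
    (hb2 : 1 ≤ b2) (hb2E : b2 ≤ ∑ i, c i)
    (σs : Pos n b1 → ℝ) (τs : Finset (Component n c) → ℝ)
    (hσs : MixedInsp n b1 σs) (hτs : MixedAtk n b2 c τs)
    (hNE1 : ∀ τ, MixedAtk n b2 c τ → U c lam σs τ ≤ U c lam σs τs)
    (hNE2 : ∀ σ, MixedInsp n b1 σ → U c lam σs τs ≤ U c lam σ τs) :
    U c lam σs τs = valueFormula n b1 b2 c lam := by
  exact disjoint_game_value_general hn hc hlam (fun j => ⟨(hlam01 j).1.le, (hlam01 j).2⟩) hb2E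
    hσs hτs hNE1 hNE2
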